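/- arXiv:1404.4485 — 3 statements merged into one kernel-verified Lean document; each statement's English description precedes it below -/
import Mathlib

section
/- For every x ∈ ℝ²: ∫_{ℝ²} log|x−y| · (1/(π(1+|y|²)²)) dy = (1/2)·log(1+|x|²). Equivalently, the logarithmic potential U^{μ_V}(x) := −∫ log|x−y| dμ_V(y) equals −(1/2)log(1+|x|²), so that U^{μ_V} + V/2 ≡ 0 on ℝ² for V(x) = log(1+|x|²). -/
open Real MeasureTheory

/-!
Averaging over rotations about the origin turns `log ‖z - a‖` into `log (max ‖z‖ ‖a‖)`, so for a
rotation invariant measure on the plane the logarithmic potential is a radial integral. For `μ_V`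
that integral splits at `‖a‖`; its outer part has the primitive `-binEntropy (1 + r ^ 2)⁻¹ / 4`,
where `(1 + r ^ 2)⁻¹` is the mass `μ_V` gives to the outside of the disc of radius `r`.
-/

section CircleAverage

theorem circleMap_norm_add_arg (z : ℂ) (θ : ℝ) :
    circleMap 0 ‖z‖ (θ + z.arg) = Circle.exp θ • z := by
  rw [circleMap_zero, Circle.smul_def, Circle.coe_exp, smul_eq_mul]
  conv_rhs => rw [← Complex.norm_mul_exp_arg_mul_I z]
  rw [Complex.ofReal_add, add_mul, Complex.exp_add]
  ring

theorem circleAverage_log_norm_sub_const_eq_log_max (a c : ℂ) (R : ℝ) :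
    circleAverage (fun z ↦ log ‖z - a‖) c R = log (max |R| ‖c - a‖) := by
  rcases eq_or_ne R 0 with rfl | hR
  · simp
  rw [← circleAverage_abs_radius,
    circleAverage_log_norm_sub_const_eq_log_radius_add_posLog (abs_ne_zero.2 hR),
    posLog_eq_log_max_one (by positivity), ← log_mul (by positivity) (by positivity),
    mul_max_of_nonneg _ _ (abs_nonneg R), mul_one, mul_inv_cancel_left₀ (abs_ne_zero.2 hR)]

theorem circleAverage_abs_log_norm_sub_const_le (a c : ℂ) (R : ℝ) :
    circleAverage (fun z ↦ ‖log ‖z - a‖‖) c R ≤ 2 * log 2 + |log (max |R| ‖c - a‖)| := by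
  set M := max |R| ‖c - a‖
  have hlog : CircleIntegrable (fun z ↦ log ‖z - a‖) c R := circleIntegrable_log_norm_sub_const R
  have hle (z : ℂ) (hz : z ∈ Metric.sphere c |R|) :
      ‖log ‖z - a‖‖ ≤ 2 * (log 2 + log⁺ M) - log ‖z - a‖ := by
    have hdist : ‖z - a‖ ≤ 2 * M := by
      have := norm_sub_le_norm_sub_add_norm_sub z c a
      rw [mem_sphere_iff_norm] at hz
      linarith [le_max_left |R| ‖c - a‖, le_max_right |R| ‖c - a‖]
    have hpos : log⁺ ‖z - a‖ ≤ log 2 + log⁺ M :=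
      (posLog_le_posLog (norm_nonneg _) hdist).trans (by simpa using posLog_nat_mul (n := 2))
    rw [norm_eq_abs]
    linarith [half_mul_log_add_log_abs (x := ‖z - a‖)]
  calc circleAverage (fun z ↦ ‖log ‖z - a‖‖) c R
      ≤ circleAverage (fun z ↦ 2 * (log 2 + log⁺ M) - log ‖z - a‖) c R :=
        circleAverage_mono hlog.norm ((circleIntegrable_const _ c R).sub hlog) hle
    _ = 2 * (log 2 + log⁺ M) - log M := by
        rw [circleAverage_fun_sub (circleIntegrable_const _ c R) hlog, circleAverage_const,
          circleAverage_log_norm_sub_const_eq_log_max]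
    _ = 2 * log 2 + |log M| := by linarith [half_mul_log_add_log_abs (x := M)]

variable {E : Type*} [NormedAddCommGroup E]

theorem circleAverage_zero_norm [NormedSpace ℝ E] (f : ℂ → E) (z : ℂ) :
    circleAverage f 0 ‖z‖ = (2 * π)⁻¹ • ∫ θ in 0..2 * π, f (Circle.exp θ • z) := by
  simp only [circleAverage_eq_integral_add z.arg, circleMap_norm_add_arg]

theorem intervalIntegrable_exp_smul_of_circleIntegrable {f : ℂ → E} {z : ℂ}
    (hf : CircleIntegrable f 0 ‖z‖) :
    IntervalIntegrable (fun θ ↦ f (Circle.exp θ • z)) volume 0 (2 * π) := by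
  have hper : Function.Periodic (fun θ ↦ f (circleMap 0 ‖z‖ θ)) (2 * π) :=
    fun θ ↦ by simp only [periodic_circleMap 0 ‖z‖ θ]
  have := (hper.intervalIntegrable₀ two_pi_pos.ne' hf z.arg (2 * π + z.arg)).comp_add_right z.arg
  simpa [circleMap_norm_add_arg] using this

end CircleAverage

section RotationInvariant

variable {E : Type*} [NormedAddCommGroup E] {μ : Measure ℂ} [SMulInvariantMeasure Circle ℂ μ]

theorem measurePreserving_prod_exp_smul (ν : Measure ℝ) [SFinite ν] [SFinite μ] :
    MeasurePreserving (fun p : ℝ × ℂ ↦ (p.1, Circle.exp p.1 • p.2)) (ν.prod μ) (ν.prod μ) :=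
  (MeasurePreserving.id ν).skew_product (g := fun θ z ↦ Circle.exp θ • z)
    (Continuous.measurable (by fun_prop))
    (ae_of_all _ fun θ ↦ (measurePreserving_smul (Circle.exp θ) μ).map_eq)

theorem integrable_prod_exp_smul_iff {ν : Measure ℝ} [IsFiniteMeasure ν] [SFinite μ] (hν : ν ≠ 0)
    {f : ℂ → E} (hf : AEStronglyMeasurable f μ) :
    Integrable (fun p : ℝ × ℂ ↦ f (Circle.exp p.1 • p.2)) (ν.prod μ) ↔ Integrable f μ := by
  refine Iff.trans ?_ (Integrable.comp_snd_iff hν)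
  exact (measurePreserving_prod_exp_smul ν).integrable_comp
    (g := fun p : ℝ × ℂ ↦ f p.2) hf.comp_snd

theorem volume_restrict_Ioc_zero_two_pi_ne_zero : volume.restrict (Set.Ioc 0 (2 * π)) ≠ 0 := by
  simp [pi_pos]

theorem integrable_of_circleAverage_norm_le [SFinite μ] {f : ℂ → E} {g : ℂ → ℝ}
    (hf : AEStronglyMeasurable f μ) (hcirc : ∀ r, CircleIntegrable f 0 r) (hg : Integrable g μ)
    (hle : ∀ z, circleAverage (fun w ↦ ‖f w‖) 0 ‖z‖ ≤ g z) : Integrable f μ := by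
  have hmeas : AEStronglyMeasurable (fun p : ℝ × ℂ ↦ f (Circle.exp p.1 • p.2))
      ((volume.restrict (Set.Ioc 0 (2 * π))).prod μ) :=
    hf.comp_snd.comp_measurePreserving (measurePreserving_prod_exp_smul _)
  rw [← integrable_prod_exp_smul_iff volume_restrict_Ioc_zero_two_pi_ne_zero hf,
    integrable_prod_iff' hmeas]
  refine ⟨ae_of_all _ fun z ↦ (intervalIntegrable_exp_smul_of_circleIntegrable (hcirc ‖z‖)).1, ?_⟩
  refine (hg.const_mul (2 * π)).mono' hmeas.norm.prod_swap.integral_prod_right'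
    (ae_of_all _ fun z ↦ ?_)
  have havg := hle z
  rw [circleAverage_zero_norm, intervalIntegral.integral_of_le two_pi_pos.le, smul_eq_mul,
    inv_mul_le_iff₀ two_pi_pos] at havg
  rwa [norm_of_nonneg (integral_nonneg fun _ ↦ norm_nonneg _)]

theorem integral_circleAverage_norm [NormedSpace ℝ E] [CompleteSpace E] [SFinite μ] {f : ℂ → E}
    (hf : Integrable f μ) : ∫ z, circleAverage f 0 ‖z‖ ∂μ = ∫ z, f z ∂μ := by
  have hrot (θ : ℝ) : ∫ z, f (Circle.exp θ • z) ∂μ = ∫ z, f z ∂μ :=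
    (measurePreserving_smul (Circle.exp θ) μ).integral_comp
      (Homeomorph.smul (Circle.exp θ)).measurableEmbedding f
  have hprod := (integrable_prod_exp_smul_iff volume_restrict_Ioc_zero_two_pi_ne_zero hf.1).2 hf
  rw [← Set.uIoc_of_le two_pi_pos.le] at hprod
  simp only [circleAverage_zero_norm]
  rw [integral_smul, ← intervalIntegral_integral_swap hprod]
  simp only [hrot, intervalIntegral.integral_const, sub_zero, smul_smul,
    inv_mul_cancel₀ two_pi_pos.ne', one_smul]

theorem integrable_log_norm_sub_const [IsFiniteMeasure μ] {a : ℂ}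
    (ha : Integrable (fun z ↦ log (max ‖z‖ ‖a‖)) μ) : Integrable (fun z ↦ log ‖z - a‖) μ := by
  refine integrable_of_circleAverage_norm_le (Measurable.aestronglyMeasurable (by fun_prop))
    (fun r ↦ circleIntegrable_log_norm_sub_const r)
    ((integrable_const (2 * log 2)).add ha.abs) fun z ↦ ?_
  simpa using circleAverage_abs_log_norm_sub_const_le a 0 ‖z‖

theorem integral_log_norm_sub_const [IsFiniteMeasure μ] {a : ℂ}
    (ha : Integrable (fun z ↦ log (max ‖z‖ ‖a‖)) μ) :
    ∫ z, log ‖z - a‖ ∂μ = ∫ z, log (max ‖z‖ ‖a‖) ∂μ := by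
  rw [← integral_circleAverage_norm (integrable_log_norm_sub_const ha)]
  simp [circleAverage_log_norm_sub_const_eq_log_max]

end RotationInvariant

section RadialIntegral

open Set Filter Topology

theorem continuous_binEntropy_inv_one_add_sq :
    Continuous fun r : ℝ ↦ binEntropy (1 + r ^ 2)⁻¹ :=
  binEntropy_continuous.comp <| Continuous.inv₀ (by fun_prop) fun r ↦ by positivity

theorem tendsto_binEntropy_inv_one_add_sq_atTop :
    Tendsto (fun r : ℝ ↦ binEntropy (1 + r ^ 2)⁻¹) atTop (𝓝 0) := by
  have hu : Tendsto (fun r : ℝ ↦ (1 + r ^ 2)⁻¹) atTop (𝓝 0) :=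
    (tendsto_atTop_add_const_left _ _ (tendsto_pow_atTop two_ne_zero)).inv_tendsto_atTop
  simpa [Function.comp_def] using (binEntropy_continuous.tendsto 0).comp hu

theorem one_sub_inv_one_add_sq (r : ℝ) : 1 - (1 + r ^ 2)⁻¹ = r ^ 2 * (1 + r ^ 2)⁻¹ := by
  field_simp
  ring

theorem binEntropy_inv_one_add_sq (r : ℝ) :
    binEntropy (1 + r ^ 2)⁻¹ = log (1 + r ^ 2) - 2 * (r ^ 2 / (1 + r ^ 2)) * log r := by
  rcases eq_or_ne r 0 with rfl | hr
  · simp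
  have hpos : 1 + r ^ 2 ≠ 0 := by positivity
  rw [binEntropy, one_sub_inv_one_add_sq, inv_inv, log_inv, log_mul (by positivity) (by positivity),
    log_inv, log_pow]
  push_cast
  field_simp
  ring

theorem hasDerivAt_binEntropy_inv_one_add_sq {r : ℝ} (hr : r ≠ 0) :
    HasDerivAt (fun r : ℝ ↦ binEntropy (1 + r ^ 2)⁻¹)
      (-4 * (r / (1 + r ^ 2) ^ 2 * log r)) r := by
  have hpos : 1 + r ^ 2 ≠ 0 := by positivity
  have hone : (1 + r ^ 2)⁻¹ ≠ 1 := by simpa using hr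
  have hinv : HasDerivAt (fun r : ℝ ↦ (1 + r ^ 2)⁻¹) (-(2 * r) / (1 + r ^ 2) ^ 2) r := by
    simpa using ((hasDerivAt_pow 2 r).const_add 1).fun_inv hpos
  refine ((hasDerivAt_binEntropy (inv_ne_zero hpos) hone).comp r hinv).congr_deriv ?_
  rw [one_sub_inv_one_add_sq, log_mul (by positivity) (by positivity), log_pow]
  push_cast
  ring

theorem hasDerivAt_sq_div_one_add_sq (r : ℝ) :
    HasDerivAt (fun r : ℝ ↦ r ^ 2 / (1 + r ^ 2)) (2 * (r / (1 + r ^ 2) ^ 2)) r := by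
  have hsq : HasDerivAt (fun r : ℝ ↦ r ^ 2) (2 * r) r := by simpa using hasDerivAt_pow 2 r
  refine (hsq.fun_div (hsq.const_add 1) (by positivity)).congr_deriv ?_
  ring

theorem continuous_div_one_add_sq_sq : Continuous fun r : ℝ ↦ r / (1 + r ^ 2) ^ 2 :=
  continuous_id.div (by fun_prop) fun r ↦ by positivity

theorem continuous_div_one_add_sq_sq_mul_log :
    Continuous fun r : ℝ ↦ r / (1 + r ^ 2) ^ 2 * log r := by
  simp only [div_mul_eq_mul_div]
  exact continuous_mul_log.div (by fun_prop) fun r ↦ by positivity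

theorem integrableOn_Ioi_div_one_add_sq_sq_mul_log {a : ℝ} (ha : 0 ≤ a) :
    IntegrableOn (fun r : ℝ ↦ r / (1 + r ^ 2) ^ 2 * log r) (Ioi a) := by
  have hIoi : IntegrableOn (fun r : ℝ ↦ r / (1 + r ^ 2) ^ 2 * log r) (Ioi 1) := by
    have hderiv := integrableOn_Ioi_deriv_of_nonpos'
      (fun r (hr : 1 ≤ r) ↦ hasDerivAt_binEntropy_inv_one_add_sq (by positivity))
      (fun r (hr : 1 < r) ↦ by have := log_pos hr; simp only [neg_mul, neg_nonpos]; positivity)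
      tendsto_binEntropy_inv_one_add_sq_atTop
    exact (integrable_const_mul_iff (by norm_num) _).1 hderiv
  refine IntegrableOn.mono_set ?_ (Ioi_subset_Ioi ha)
  rw [← Ioc_union_Ioi_eq_Ioi zero_le_one]
  exact continuous_div_one_add_sq_sq_mul_log.integrableOn_Ioc.union hIoi

theorem integral_Ioi_div_one_add_sq_sq_mul_log {a : ℝ} (ha : 0 ≤ a) :
    ∫ r in Ioi a, r / (1 + r ^ 2) ^ 2 * log r = binEntropy (1 + a ^ 2)⁻¹ / 4 := by
  have hftc := integral_Ioi_of_hasDerivAt_of_tendsto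
    continuous_binEntropy_inv_one_add_sq.continuousWithinAt
    (fun r (hr : a < r) ↦ hasDerivAt_binEntropy_inv_one_add_sq (ha.trans_lt hr).ne')
    ((integrableOn_Ioi_div_one_add_sq_sq_mul_log ha).const_mul _)
    tendsto_binEntropy_inv_one_add_sq_atTop
  rw [integral_const_mul] at hftc
  linarith

theorem integral_Ioc_div_one_add_sq_sq {a : ℝ} (ha : 0 ≤ a) :
    ∫ r in Ioc 0 a, r / (1 + r ^ 2) ^ 2 = a ^ 2 / (1 + a ^ 2) / 2 := by
  have hftc := intervalIntegral.integral_eq_sub_of_hasDerivAt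
    (fun r _ ↦ hasDerivAt_sq_div_one_add_sq r)
    ((continuous_div_one_add_sq_sq.const_mul 2).intervalIntegrable 0 a)
  rw [intervalIntegral.integral_const_mul, intervalIntegral.integral_of_le ha] at hftc
  linear_combination hftc / 2

section LogMax

variable {a : ℝ}

theorem eqOn_Ioc_mul_log_max (w : ℝ → ℝ) :
    EqOn (fun r ↦ w r * log (max r a)) (fun r ↦ w r * log a) (Ioc 0 a) :=
  fun r hr ↦ by simp only [max_eq_right hr.2]

theorem eqOn_Ioi_mul_log_max (w : ℝ → ℝ) :
    EqOn (fun r ↦ w r * log (max r a)) (fun r ↦ w r * log r) (Ioi a) :=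
  fun r (hr : a < r) ↦ by simp only [max_eq_left hr.le]

theorem integrableOn_Ioc_div_one_add_sq_sq_mul_log_max :
    IntegrableOn (fun r : ℝ ↦ r / (1 + r ^ 2) ^ 2 * log (max r a)) (Ioc 0 a) :=
  IntegrableOn.congr_fun (continuous_div_one_add_sq_sq.integrableOn_Ioc.mul_const _)
    (eqOn_Ioc_mul_log_max _).symm measurableSet_Ioc

theorem integrableOn_Ioi_div_one_add_sq_sq_mul_log_max_self (ha : 0 ≤ a) :
    IntegrableOn (fun r : ℝ ↦ r / (1 + r ^ 2) ^ 2 * log (max r a)) (Ioi a) :=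
  (integrableOn_Ioi_div_one_add_sq_sq_mul_log ha).congr_fun
    (eqOn_Ioi_mul_log_max _).symm measurableSet_Ioi

theorem integrableOn_Ioi_div_one_add_sq_sq_mul_log_max (ha : 0 ≤ a) :
    IntegrableOn (fun r : ℝ ↦ r / (1 + r ^ 2) ^ 2 * log (max r a)) (Ioi 0) := by
  rw [← Ioc_union_Ioi_eq_Ioi ha]
  exact integrableOn_Ioc_div_one_add_sq_sq_mul_log_max.union
    (integrableOn_Ioi_div_one_add_sq_sq_mul_log_max_self ha)

theorem integral_Ioi_div_one_add_sq_sq_mul_log_max (ha : 0 ≤ a) :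
    ∫ r in Ioi 0, r / (1 + r ^ 2) ^ 2 * log (max r a) = log (1 + a ^ 2) / 4 := by
  rw [← Ioc_union_Ioi_eq_Ioi ha, setIntegral_union (Ioc_disjoint_Ioi le_rfl) measurableSet_Ioi
      integrableOn_Ioc_div_one_add_sq_sq_mul_log_max
      (integrableOn_Ioi_div_one_add_sq_sq_mul_log_max_self ha),
    setIntegral_congr_fun measurableSet_Ioc (eqOn_Ioc_mul_log_max _),
    setIntegral_congr_fun measurableSet_Ioi (eqOn_Ioi_mul_log_max _),
    integral_mul_const, integral_Ioc_div_one_add_sq_sq ha,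
    integral_Ioi_div_one_add_sq_sq_mul_log ha, binEntropy_inv_one_add_sq]
  ring

end LogMax

end RadialIntegral

theorem smulInvariantMeasure_withDensity {G α : Type*} [Group G] [MulAction G α]
    [MeasurableSpace α] [MeasurableConstSMul G α] {μ : Measure α} [SMulInvariantMeasure G α μ]
    {ρ : α → ENNReal} (hρ : ∀ (g : G) (x : α), ρ (g • x) = ρ x) :
    SMulInvariantMeasure G α (μ.withDensity ρ) where
  measure_preimage_smul g s hs := by
    rw [withDensity_apply _ hs, withDensity_apply _ (measurable_const_smul g hs),
      ← (measurePreserving_smul g μ).setLIntegral_comp_preimage_emb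
        (MeasurableEquiv.smul g).measurableEmbedding ρ s]
    simp only [hρ]

instance smulInvariantMeasure_circle_volume : SMulInvariantMeasure Circle ℂ volume where
  measure_preimage_smul c _ hs :=
    (rotation c).measurePreserving.measure_preimage hs.nullMeasurableSet

/-- The measure `μ_V`, on the plane identified with `ℂ` so that its rotations are the action of
`Circle`. -/
noncomputable def muV : Measure ℂ :=
  volume.withDensity fun z ↦ ENNReal.ofReal (1 / (π * (1 + ‖z‖ ^ 2) ^ 2))

instance smulInvariantMeasure_circle_muV : SMulInvariantMeasure Circle ℂ muV :=
  smulInvariantMeasure_withDensity fun c z ↦ by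
    simp only [Circle.smul_def, norm_smul, Circle.norm_coe, one_mul]

instance isFiniteMeasure_muV : IsFiniteMeasure muV := by
  refine isFiniteMeasure_withDensity_ofReal (Integrable.hasFiniteIntegral ?_)
  have hbracket : Integrable fun z : ℂ ↦ (1 + ‖z‖ ^ 2) ^ (-4 / 2 : ℝ) :=
    integrable_rpow_neg_one_add_norm_sq (by norm_num [Complex.finrank_real_complex])
  refine (hbracket.const_mul π⁻¹).congr (ae_of_all _ fun z ↦ ?_)
  norm_num [rpow_neg, mul_comm, show (0 : ℝ) ≤ 1 + ‖z‖ ^ 2 by positivity]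

theorem integrable_muV_iff {f : ℂ → ℝ} :
    Integrable f muV ↔ Integrable fun z ↦ f z * (1 / (π * (1 + ‖z‖ ^ 2) ^ 2)) := by
  rw [muV, integrable_withDensity_iff_integrable_smul' (by fun_prop)
    (ae_of_all _ fun _ ↦ ENNReal.ofReal_lt_top)]
  refine integrable_congr (ae_of_all _ fun z ↦ ?_)
  simp only [ENNReal.toReal_ofReal (show 0 ≤ 1 / (π * (1 + ‖z‖ ^ 2) ^ 2) by positivity),
    smul_eq_mul, mul_comm]

theorem integral_muV (f : ℂ → ℝ) :
    ∫ z, f z ∂muV = ∫ z, f z * (1 / (π * (1 + ‖z‖ ^ 2) ^ 2)) := by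
  rw [muV, integral_withDensity_eq_integral_toReal_smul (by fun_prop)
    (ae_of_all _ fun _ ↦ ENNReal.ofReal_lt_top)]
  congr with z
  rw [ENNReal.toReal_ofReal (by positivity), smul_eq_mul, mul_comm]

theorem mul_mul_one_div_pi_mul_one_add_sq_sq (r t : ℝ) :
    r * (t * (1 / (π * (1 + r ^ 2) ^ 2))) = π⁻¹ * (r / (1 + r ^ 2) ^ 2 * t) := by
  field_simp

theorem integrable_muV_comp_norm_iff {f : ℝ → ℝ} :
    Integrable (fun z ↦ f ‖z‖) muV ↔
      IntegrableOn (fun r ↦ r / (1 + r ^ 2) ^ 2 * f r) (Set.Ioi 0) := by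
  rw [integrable_muV_iff,
    integrable_fun_norm_addHaar volume (f := fun r ↦ f r * (1 / (π * (1 + r ^ 2) ^ 2))),
    Complex.finrank_real_complex]
  simp only [Nat.reduceSub, pow_one, smul_eq_mul, mul_mul_one_div_pi_mul_one_add_sq_sq]
  exact integrable_const_mul_iff (inv_ne_zero pi_ne_zero).isUnit _

theorem integral_muV_comp_norm (f : ℝ → ℝ) :
    ∫ z, f ‖z‖ ∂muV = 2 * ∫ r in Set.Ioi 0, r / (1 + r ^ 2) ^ 2 * f r := by
  have hball : volume.real (Metric.ball (0 : ℂ) 1) = π := by simp [measureReal_def]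
  rw [integral_muV,
    integral_fun_norm_addHaar volume (fun r ↦ f r * (1 / (π * (1 + r ^ 2) ^ 2))),
    Complex.finrank_real_complex, hball]
  simp only [Nat.reduceSub, pow_one, smul_eq_mul, mul_mul_one_div_pi_mul_one_add_sq_sq,
    integral_const_mul, nsmul_eq_mul, Nat.cast_ofNat, mul_inv_cancel_left₀ pi_ne_zero]

theorem integral_log_norm_sub_const_muV (a : ℂ) :
    ∫ z, log ‖z - a‖ ∂muV = 1 / 2 * log (1 + ‖a‖ ^ 2) := by
  have ha := norm_nonneg a
  rw [integral_log_norm_sub_const, integral_muV_comp_norm (fun r ↦ log (max r ‖a‖)),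
    integral_Ioi_div_one_add_sq_sq_mul_log_max ha]
  · ring
  · exact (integrable_muV_comp_norm_iff (f := fun r ↦ log (max r ‖a‖))).2
      (integrableOn_Ioi_div_one_add_sq_sq_mul_log_max ha)

theorem log_potential_muV_general {E : Type*} [NormedAddCommGroup E] [InnerProductSpace ℝ E]
    [FiniteDimensional ℝ E] [MeasurableSpace E] [BorelSpace E]
    (hE : Module.finrank ℝ E = 2) (x : E) :
    ∫ y, Real.log (dist x y) * (1 / (π * (1 + ‖y‖ ^ 2) ^ 2)) =
      (1 / 2) * Real.log (1 + ‖x‖ ^ 2) := by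
  let e : ℂ ≃ₗᵢ[ℝ] E :=
    Complex.isometryOfOrthonormal ((stdOrthonormalBasis ℝ E).reindex (finCongr hE))
  calc ∫ y, Real.log (dist x y) * (1 / (π * (1 + ‖y‖ ^ 2) ^ 2))
      = ∫ z, log (dist x (e z)) * (1 / (π * (1 + ‖e z‖ ^ 2) ^ 2)) :=
        (e.measurePreserving.integral_comp e.toHomeomorph.measurableEmbedding _).symm
    _ = ∫ z, log ‖z - e.symm x‖ ∂muV := by
        rw [integral_muV]
        simp only [dist_comm x, dist_eq_norm, ← e.symm.norm_map (e _ - x), map_sub,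
          e.symm_apply_apply, e.norm_map]
    _ = 1 / 2 * log (1 + ‖x‖ ^ 2) := by
        rw [integral_log_norm_sub_const_muV, e.symm.norm_map]

/-- For every `x ∈ ℝ²`, `∫ log|x−y| · 1/(π(1+|y|²)²) dy = (1/2) log(1+|x|²)`;
equivalently the logarithmic potential of `μ_V` is `U^{μ_V}(x) = −(1/2)log(1+|x|²)`,
so `U^{μ_V} + V/2 ≡ 0` for `V(x) = log(1+|x|²)`. -/
theorem log_potential_muV (x : EuclideanSpace ℝ (Fin 2)) :
    ∫ y, Real.log (dist x y) * (1 / (π * (1 + ‖y‖^2)^2)) = (1/2) * Real.log (1 + ‖x‖^2) :=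
  log_potential_muV_general finrank_euclideanSpace_fin x
end

section
/- The pushforward map μ ↦ T♯μ is a bijection from the set of Borel probability measures on ℝ² onto the set of Borel probability measures μ̃ on the sphere S with μ̃({N}) = 0, and it is a homeomorphism for the topologies of weak convergence: for probability measures μₙ, μ on ℝ², μₙ → μ weakly if and only if T♯μₙ → T♯μ weakly. -/
open Real Filter MeasureTheory

/-- The inverse stereographic projection onto the sphere of radius `1/2`
centered at `(0,0,1/2)`. -/
noncomputable def stereoT (x : EuclideanSpace ℝ (Fin 2)) : EuclideanSpace ℝ (Fin 3) :=
  (WithLp.equiv 2 (Fin 3 → ℝ)).symm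
    ![x 0 / (1 + ‖x‖^2), x 1 / (1 + ‖x‖^2), ‖x‖^2 / (1 + ‖x‖^2)]

/-- The north pole `N = (0,0,1)`. -/
noncomputable def northPole : EuclideanSpace ℝ (Fin 3) :=
  (WithLp.equiv 2 (Fin 3 → ℝ)).symm ![0, 0, 1]

/-- The center `(0,0,1/2)` of the sphere `S`. -/
noncomputable def sphereCenter : EuclideanSpace ℝ (Fin 3) :=
  (WithLp.equiv 2 (Fin 3 → ℝ)).symm ![0, 0, 1/2]

/-!
Stereographic projection away from `N` inverts `T`, and it is continuous off the plane through `N`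
tangent to `S`. Hence `T` is a topological embedding with range `S \ {N}`. Everything else holds for
an arbitrary embedding `f` with Borel range: `Measure.comap f` inverts the pushforward on measures
carried by the range, and since every closed set of the source is the preimage of a closed set of
the target, the portmanteau theorem pulls weak convergence back along `f`.
-/

open Set Topology

lemma ae_mem_sdiff_iff {Ω : Type*} [MeasurableSpace Ω] {ν : Measure Ω} [IsProbabilityMeasure ν]
    {s t : Set Ω} (hs : MeasurableSet s) : (∀ᵐ y ∂ν, y ∈ s \ t) ↔ ν s = 1 ∧ ν t = 0 := by
  simp only [Set.mem_sdiff, eventually_and, measure_eq_zero_iff_ae_notMem]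
  exact and_congr_left' (mem_ae_iff_prob_eq_one hs)

section Embedding

variable {X Y ι : Type*} [TopologicalSpace X] [TopologicalSpace Y] {f : X → Y}

lemma isEmbedding_of_leftInverse_of_continuousAt {g : Y → X} (hgf : Function.LeftInverse g f)
    (hf : Continuous f) (hg : ∀ x, ContinuousAt g (f x)) : IsEmbedding f where
  injective := hgf.injective
  eq_induced := by
    refine (isInducing_iff_nhds.2 fun x => le_antisymm (hf.tendsto x).le_comap ?_).eq_induced
    calc comap f (𝓝 (f x))
        ≤ comap f (comap g (𝓝 (g (f x)))) := comap_mono (hg x).tendsto.le_comap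
      _ = 𝓝 x := by rw [comap_comap, hgf.comp_eq_id, comap_id, hgf x]

variable [MeasurableSpace X] [MeasurableSpace Y] [BorelSpace Y] [HasOuterApproxClosed Y]
  {L : Filter ι} [L.IsCountablyGenerated]

lemma tendsto_probabilityMeasure_map_iff_of_isInducing [OpensMeasurableSpace X]
    (hf : IsInducing f) {μs : ι → ProbabilityMeasure X} {μ : ProbabilityMeasure X} :
    Tendsto (fun i => (μs i).map hf.continuous.aemeasurable) L
      (𝓝 (μ.map hf.continuous.aemeasurable)) ↔ Tendsto μs L (𝓝 μ) := by
  refine ⟨fun h => tendsto_of_forall_isClosed_limsup_le' fun F hF => ?_,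
    fun h => ProbabilityMeasure.tendsto_map_of_tendsto_of_continuous μs μ h hf.continuous⟩
  obtain ⟨C, hC, rfl⟩ := hf.isClosed_iff.1 hF
  have hlimsup := ProbabilityMeasure.limsup_measure_closed_le_of_tendsto h hC
  simpa only [ProbabilityMeasure.toMeasure_map,
    Measure.map_apply hf.continuous.measurable hC.measurableSet] using hlimsup

theorem pushforward_stereoT_homeo_general [BorelSpace X] (hf : IsEmbedding f) {s t : Set Y}
    (hs : MeasurableSet s) (ht : MeasurableSet t) (hrange : range f = s \ t) :
    (∀ μ : Measure X, IsProbabilityMeasure μ →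
      IsProbabilityMeasure (μ.map f) ∧ (μ.map f) s = 1 ∧ (μ.map f) t = 0) ∧
    Function.Injective (Measure.map f) ∧
    (∀ ν : Measure Y, IsProbabilityMeasure ν → ν s = 1 → ν t = 0 →
      ∃ μ : Measure X, IsProbabilityMeasure μ ∧ μ.map f = ν) ∧
    (∀ (μs : ι → Measure X) (μ₀ : Measure X),
      (∀ i, IsProbabilityMeasure (μs i)) → IsProbabilityMeasure μ₀ →
      ((∀ φ : BoundedContinuousFunction X ℝ,
          Tendsto (fun i => ∫ x, φ x ∂(μs i)) L (𝓝 (∫ x, φ x ∂μ₀))) ↔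
       (∀ ψ : BoundedContinuousFunction Y ℝ,
          Tendsto (fun i => ∫ y, ψ y ∂((μs i).map f)) L (𝓝 (∫ y, ψ y ∂(μ₀.map f)))))) := by
  have hfm : MeasurableEmbedding f := hf.measurableEmbedding (hrange ▸ hs.diff ht)
  refine ⟨fun μ _ => ?_, Function.LeftInverse.injective hfm.comap_map, fun ν _ hνs hνt => ?_,
    fun μs μ₀ hμs hμ₀ => ?_⟩
  · have hprob := Measure.isProbabilityMeasure_map (μ := μ) hfm.measurable.aemeasurable
    exact ⟨hprob, (ae_mem_sdiff_iff hs).1 (hrange ▸ ae_map_mem_range f hfm.measurableSet_range μ)⟩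
  · have hν : ∀ᵐ y ∂ν, y ∈ range f := hrange ▸ (ae_mem_sdiff_iff hs).2 ⟨hνs, hνt⟩
    exact ⟨ν.comap f, hfm.isProbabilityMeasure_comap hν,
      by rw [hfm.map_comap, Measure.restrict_eq_self_of_ae_mem hν]⟩
  · let P : ι → ProbabilityMeasure X := fun i => ⟨μs i, hμs i⟩
    let P₀ : ProbabilityMeasure X := ⟨μ₀, hμ₀⟩
    have hP := tendsto_probabilityMeasure_map_iff_of_isInducing (L := L) hf.isInducing
      (μs := P) (μ := P₀)
    simp only [ProbabilityMeasure.tendsto_iff_forall_integral_tendsto] at hP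
    exact hP.symm

end Embedding

section Stereographic

variable (x : EuclideanSpace ℝ (Fin 2)) {y : EuclideanSpace ℝ (Fin 3)}

/-- Stereographic projection from the north pole `(0,0,1)` onto the plane `y₂ = 0`, the inverse of
`stereoT` on the punctured sphere. It is defined on all of `ℝ³`, with junk value `0` on the
plane `y₂ = 1`. -/
noncomputable def stereoProj (y : EuclideanSpace ℝ (Fin 3)) : EuclideanSpace ℝ (Fin 2) :=
  !₂[y 0 / (1 - y 2), y 1 / (1 - y 2)]

lemma one_add_norm_sq_ne_zero {E : Type*} [SeminormedAddGroup E] (v : E) : 1 + ‖v‖ ^ 2 ≠ 0 := by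
  positivity

lemma one_sub_stereoT_two : 1 - stereoT x 2 = 1 / (1 + ‖x‖ ^ 2) := by
  change 1 - ‖x‖ ^ 2 / (1 + ‖x‖ ^ 2) = _
  field_simp [one_add_norm_sq_ne_zero x]
  ring

lemma stereoT_two_ne_one : stereoT x 2 ≠ 1 := by
  refine (sub_ne_zero.1 ?_).symm
  rw [one_sub_stereoT_two]
  positivity

lemma stereoT_ne_northPole : stereoT x ≠ northPole :=
  fun h => stereoT_two_ne_one x (congrArg (fun y => y 2) h)

lemma leftInverse_stereoProj_stereoT : Function.LeftInverse stereoProj stereoT := by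
  intro x
  have hcoord (i : Fin 2) : x i / (1 + ‖x‖ ^ 2) / (1 - stereoT x 2) = x i := by
    rw [one_sub_stereoT_two]
    field_simp [one_add_norm_sq_ne_zero x]
  ext i
  fin_cases i
  · exact hcoord 0
  · exact hcoord 1

lemma mem_sphere_sphereCenter_iff :
    y ∈ Metric.sphere sphereCenter (1 / 2) ↔ y 0 ^ 2 + y 1 ^ 2 = y 2 * (1 - y 2) := by
  have hdist : ‖y - sphereCenter‖ ^ 2 = y 0 ^ 2 + y 1 ^ 2 + (y 2 - 1 / 2) ^ 2 := by
    simp [EuclideanSpace.real_norm_sq_eq, Fin.sum_univ_three, sphereCenter]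
  rw [mem_sphere_iff_norm, ← sq_eq_sq₀ (norm_nonneg _) (by norm_num), hdist]
  constructor <;> intro h <;> linear_combination h

lemma stereoT_mem_sphere : stereoT x ∈ Metric.sphere sphereCenter (1 / 2) := by
  rw [mem_sphere_sphereCenter_iff, one_sub_stereoT_two]
  change (x 0 / (1 + ‖x‖ ^ 2)) ^ 2 + (x 1 / (1 + ‖x‖ ^ 2)) ^ 2 =
    ‖x‖ ^ 2 / (1 + ‖x‖ ^ 2) * (1 / (1 + ‖x‖ ^ 2))
  field_simp [one_add_norm_sq_ne_zero x]
  rw [EuclideanSpace.real_norm_sq_eq, Fin.sum_univ_two]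

lemma eq_northPole_of_mem_sphere (hy : y ∈ Metric.sphere sphereCenter (1 / 2)) (h2 : y 2 = 1) :
    y = northPole := by
  rw [mem_sphere_sphereCenter_iff, h2, sub_self, mul_zero] at hy
  have h0 : y 0 = 0 := by nlinarith [sq_nonneg (y 0), sq_nonneg (y 1)]
  have h1 : y 1 = 0 := by nlinarith [sq_nonneg (y 0), sq_nonneg (y 1)]
  ext i
  fin_cases i
  · exact h0
  · exact h1
  · exact h2

lemma norm_stereoProj_sq (hy : y ∈ Metric.sphere sphereCenter (1 / 2)) (h2 : y 2 ≠ 1) :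
    ‖stereoProj y‖ ^ 2 = y 2 / (1 - y 2) := by
  have hsub : 1 - y 2 ≠ 0 := sub_ne_zero.2 h2.symm
  calc ‖stereoProj y‖ ^ 2
      = (y 0 / (1 - y 2)) ^ 2 + (y 1 / (1 - y 2)) ^ 2 := by
        simp [EuclideanSpace.real_norm_sq_eq, stereoProj]
    _ = (y 0 ^ 2 + y 1 ^ 2) / (1 - y 2) ^ 2 := by rw [div_pow, div_pow, ← add_div]
    _ = y 2 / (1 - y 2) := by
        rw [mem_sphere_sphereCenter_iff.1 hy]
        field_simp

lemma stereoT_stereoProj (hy : y ∈ Metric.sphere sphereCenter (1 / 2)) (h2 : y 2 ≠ 1) :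
    stereoT (stereoProj y) = y := by
  have hsub : 1 - y 2 ≠ 0 := sub_ne_zero.2 h2.symm
  have hnorm := norm_stereoProj_sq hy h2
  have hden : 1 + ‖stereoProj y‖ ^ 2 = 1 / (1 - y 2) := by
    rw [hnorm]
    field_simp
    ring
  have hcancel (a : ℝ) : a / (1 - y 2) / (1 + ‖stereoProj y‖ ^ 2) = a := by
    rw [hden]
    field_simp
  ext i
  fin_cases i
  · exact hcancel (y 0)
  · exact hcancel (y 1)
  · exact (congrArg (· / (1 + ‖stereoProj y‖ ^ 2)) hnorm).trans (hcancel (y 2))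

lemma range_stereoT : range stereoT = Metric.sphere sphereCenter (1 / 2) \ {northPole} := by
  refine Subset.antisymm (range_subset_iff.2 fun x => ?_) fun y ⟨hy, hN⟩ => ?_
  · exact ⟨stereoT_mem_sphere x, stereoT_ne_northPole x⟩
  · exact ⟨stereoProj y, stereoT_stereoProj hy fun h2 => hN (eq_northPole_of_mem_sphere hy h2)⟩

lemma continuous_stereoT : Continuous stereoT := by
  refine (PiLp.continuous_toLp 2 _).comp (continuous_pi fun i => ?_)
  fin_cases i <;> exact Continuous.div (by fun_prop) (by fun_prop) one_add_norm_sq_ne_zero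

lemma continuousAt_stereoProj (h2 : y 2 ≠ 1) : ContinuousAt stereoProj y := by
  have hsub : 1 - y 2 ≠ 0 := sub_ne_zero.2 h2.symm
  refine (PiLp.continuous_toLp 2 _).continuousAt.comp (continuousAt_pi.2 fun i => ?_)
  fin_cases i <;> exact ContinuousAt.div (by fun_prop) (by fun_prop) hsub

lemma isEmbedding_stereoT : IsEmbedding stereoT :=
  isEmbedding_of_leftInverse_of_continuousAt leftInverse_stereoProj_stereoT continuous_stereoT
    fun x => continuousAt_stereoProj (stereoT_two_ne_one x)

end Stereographic

/-- The pushforward by `T` is a bijection from probability measures on `ℝ²` onto probability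
measures on the sphere `S` giving no mass to `{N}`, and is a homeomorphism for the weak
topologies. -/
theorem pushforward_stereoT_homeo :
    (∀ μ : Measure (EuclideanSpace ℝ (Fin 2)), IsProbabilityMeasure μ →
      IsProbabilityMeasure (μ.map stereoT) ∧
      (μ.map stereoT) (Metric.sphere sphereCenter (1/2)) = 1 ∧
      (μ.map stereoT) {northPole} = 0) ∧
    (∀ μ₁ μ₂ : Measure (EuclideanSpace ℝ (Fin 2)),
      IsProbabilityMeasure μ₁ → IsProbabilityMeasure μ₂ →
      μ₁.map stereoT = μ₂.map stereoT → μ₁ = μ₂) ∧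
    (∀ ν : Measure (EuclideanSpace ℝ (Fin 3)), IsProbabilityMeasure ν →
      ν (Metric.sphere sphereCenter (1/2)) = 1 → ν {northPole} = 0 →
      ∃ μ : Measure (EuclideanSpace ℝ (Fin 2)),
        IsProbabilityMeasure μ ∧ μ.map stereoT = ν) ∧
    (∀ (μseq : ℕ → Measure (EuclideanSpace ℝ (Fin 2)))
       (μ₀ : Measure (EuclideanSpace ℝ (Fin 2))),
      (∀ n, IsProbabilityMeasure (μseq n)) → IsProbabilityMeasure μ₀ →
      ((∀ f : BoundedContinuousFunction (EuclideanSpace ℝ (Fin 2)) ℝ,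
          Tendsto (fun n => ∫ a, f a ∂(μseq n)) atTop (nhds (∫ a, f a ∂μ₀))) ↔
       (∀ g : BoundedContinuousFunction (EuclideanSpace ℝ (Fin 3)) ℝ,
          Tendsto (fun n => ∫ a, g a ∂((μseq n).map stereoT)) atTop
            (nhds (∫ a, g a ∂(μ₀.map stereoT)))))) := by
  obtain ⟨hmap, hinj, hsurj, hweak⟩ :=
    pushforward_stereoT_homeo_general (L := atTop (α := ℕ)) isEmbedding_stereoT
      Metric.isClosed_sphere.measurableSet (measurableSet_singleton _) range_stereoT
  exact ⟨hmap, fun _ _ _ _ h => hinj h, hsurj, hweak⟩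
end

section
/- Let c > 0. There exists a constant C depending only on c such that the following holds for every n ≥ 2: if y₁,…,yₙ are points of the unit sphere 𝕊² ⊂ ℝ³ satisfying ‖yᵢ − yⱼ‖ > c/√n for all i ≠ j and ‖yᵢ − N‖ > c/√n for all i, where N = (0,0,1), then (i) for every r > 0, #{i : ‖yᵢ − N‖ ≤ r} ≤ C·r²·n, and (ii) for every δ ∈ (0, 1/2], ∑_{i : ‖yᵢ−N‖ ≤ δ} (−log‖yᵢ − N‖) ≤ C·n·δ²·(1 + |log δ|). -/
open Real

/-- The north pole `N = (0,0,1)` of the unit sphere `𝕊² ⊂ ℝ³`. -/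
noncomputable def northPoleUnit : EuclideanSpace ℝ (Fin 3) :=
  (WithLp.equiv 2 (Fin 3 → ℝ)).symm ![0, 0, 1]

/-!
Let `s` be the separation of the points. Put the copies `(1 + k s) yᵢ`, `0 ≤ k ≤ r / s`, on the
rays through the points `yᵢ` of a cap of radius `r`. They are `s / 2`-separated because radial
retraction onto the unit ball is `2`-Lipschitz, and they lie in a ball of radius `2 r`; comparing
volumes in dimension `d + 1`, the number of points times `r / s` is at most `(9 r / s) ^ (d + 1)`.
This bounds the number of points by a multiple of `(r / s) ^ d`.

For the logarithmic sum, order the distances increasingly as `ρ₁ ≤ … ≤ ρₘ`. If at most `A r ^ d`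
of them are `≤ r`, then `j ≤ A ρⱼ ^ d`, hence `m! ≤ ∏ⱼ A ρⱼ ^ d`. With `M = A δ ^ d` this gives
`d ∑ⱼ log (δ / ρⱼ) ≤ log (M ^ m / m!) ≤ M`.
-/

open Module MeasureTheory Metric
open scoped Finset Nat

section Packing

variable {E ι : Type*} [NormedAddCommGroup E] [NormedSpace ℝ E]

theorem card_le_of_pairwise_le_dist_of_mem_closedBall [FiniteDimensional ℝ E] {t : Finset ι}
    {x : ι → E} {p : E} {s R : ℝ} (hs : 0 < s) (hR : 0 ≤ R)
    (hsep : (t : Set ι).Pairwise fun i j ↦ s ≤ dist (x i) (x j))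
    (hball : ∀ i ∈ t, x i ∈ closedBall p R) :
    (#t : ℝ) ≤ (1 + 2 * R / s) ^ finrank ℝ E := by
  borelize E
  let μ : Measure E := Measure.addHaar
  have hvol (z : E) {ρ : ℝ} (hρ : 0 < ρ) :
      μ.real (ball z ρ) = ρ ^ finrank ℝ E * μ.real (ball 0 1) := by
    simp [measureReal_def, μ.addHaar_ball_of_pos z hρ, pow_nonneg hρ.le]
  have hunit : 0 < μ.real (ball 0 1) :=
    ENNReal.toReal_pos (measure_ball_pos μ _ one_pos).ne' measure_ball_lt_top.ne
  have hdisj : (t : Set ι).PairwiseDisjoint fun i ↦ ball (x i) (s / 2) := fun i hi j hj hij ↦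
    ball_disjoint_ball (by linarith [hsep hi hj hij])
  have hsub : ⋃ i ∈ t, ball (x i) (s / 2) ⊆ ball p (R + s / 2) :=
    Set.iUnion₂_subset fun i hi ↦ ball_subset_ball' (by linarith [mem_closedBall.1 (hball i hi)])
  have hmul : #t * (s / 2) ^ finrank ℝ E ≤ (R + s / 2) ^ finrank ℝ E := by
    refine le_of_mul_le_mul_right ?_ hunit
    calc
      #t * (s / 2) ^ finrank ℝ E * μ.real (ball 0 1) = μ.real (⋃ i ∈ t, ball (x i) (s / 2)) := by
        rw [measureReal_biUnion_finset hdisj fun _ _ ↦ measurableSet_ball]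
        simp [hvol _ (half_pos hs), mul_assoc]
      _ ≤ μ.real (ball p (R + s / 2)) := measureReal_mono hsub
      _ = (R + s / 2) ^ finrank ℝ E * μ.real (ball 0 1) := hvol p (by positivity)
  calc
    (#t : ℝ) ≤ (R + s / 2) ^ finrank ℝ E / (s / 2) ^ finrank ℝ E :=
      (le_div_iff₀ (by positivity)).2 hmul
    _ = (1 + 2 * R / s) ^ finrank ℝ E := by
      rw [← div_pow]
      congr 1
      field_simp
      ring

theorem norm_sub_le_two_mul_norm_smul_sub_smul {x y : E} (hxy : ‖x‖ = ‖y‖) {a b : ℝ}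
    (ha : 1 ≤ a) (hb : 0 ≤ b) : ‖x - y‖ ≤ 2 * ‖a • x - b • y‖ := by
  have ha' : 0 ≤ a := zero_le_one.trans ha
  have hscale : ‖(a - b) • y‖ ≤ ‖a • x - b • y‖ :=
    calc
      ‖(a - b) • y‖ = |‖a • x‖ - ‖b • y‖| := by
        rw [norm_smul, norm_smul, norm_smul, hxy, ← sub_mul, abs_mul, abs_norm,
          Real.norm_of_nonneg ha', Real.norm_of_nonneg hb, Real.norm_eq_abs]
      _ ≤ ‖a • x - b • y‖ := abs_norm_sub_norm_le _ _
  calc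
    ‖x - y‖ ≤ ‖a • (x - y)‖ := by
      rw [norm_smul, Real.norm_of_nonneg ha']
      exact le_mul_of_one_le_left (norm_nonneg _) ha
    _ = ‖(a • x - b • y) - (a - b) • y‖ := by
      congr 1
      module
    _ ≤ ‖a • x - b • y‖ + ‖(a - b) • y‖ := norm_sub_le _ _
    _ ≤ 2 * ‖a • x - b • y‖ := by linarith

/-- The `k`-th outward copy `(1 + k s) yᵢ` of the point `yᵢ`, indexed by the pair `(i, k)`. Such
copies thicken a family of points on the unit sphere to a family filling a solid region. -/
def radialCopy (y : ι → E) (s : ℝ) (q : ι × ℕ) : E :=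
  (1 + q.2 * s) • y q.1

theorem half_le_dist_radialCopy {t : Finset ι} {y : ι → E} {s : ℝ} (hs : 0 ≤ s)
    (hy : ∀ i ∈ t, ‖y i‖ = 1) (hsep : (t : Set ι).Pairwise fun i j ↦ s ≤ dist (y i) (y j))
    {q q' : ι × ℕ} (hq : q.1 ∈ t) (hq' : q'.1 ∈ t) (hne : q ≠ q') :
    s / 2 ≤ dist (radialCopy y s q) (radialCopy y s q') := by
  obtain ⟨i, k⟩ := q
  obtain ⟨j, l⟩ := q'
  by_cases hij : i = j
  · subst hij
    have hkl : (1 : ℝ) ≤ |(k : ℝ) - l| := by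
      have : (k : ℤ) ≠ l := by simpa using hne
      exact_mod_cast Int.one_le_abs (sub_ne_zero.2 this)
    have hdist : dist (radialCopy y s (i, k)) (radialCopy y s (i, l)) = |(k : ℝ) - l| * s := by
      rw [dist_eq_norm, radialCopy, radialCopy, ← sub_smul, norm_smul, hy i hq, mul_one,
        add_sub_add_left_eq_sub, ← sub_mul, norm_mul, Real.norm_of_nonneg hs, Real.norm_eq_abs]
    rw [hdist]
    nlinarith
  · have hsij : s ≤ ‖y i - y j‖ := dist_eq_norm (y i) (y j) ▸ hsep hq hq' hij
    have hretract : ‖y i - y j‖ ≤ 2 * dist (radialCopy y s (i, k)) (radialCopy y s (j, l)) :=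
      dist_eq_norm (radialCopy y s (i, k)) _ ▸ norm_sub_le_two_mul_norm_smul_sub_smul
        ((hy i hq).trans (hy j hq').symm) (le_add_of_nonneg_right (by positivity)) (by positivity)
    linarith

theorem dist_radialCopy_le {y : ι → E} {s : ℝ} (hs : 0 ≤ s) {q : ι × ℕ} (hy : ‖y q.1‖ = 1)
    (p : E) : dist (radialCopy y s q) p ≤ q.2 * s + dist (y q.1) p := by
  have hshift : dist (radialCopy y s q) (y q.1) = q.2 * s := by
    rw [dist_eq_norm, radialCopy, add_smul, one_smul, add_sub_cancel_left, norm_smul, hy, mul_one,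
      Real.norm_of_nonneg (by positivity)]
  exact hshift ▸ dist_triangle _ _ _

theorem card_le_of_norm_eq_one_of_mem_closedBall {d : ℕ} (hE : finrank ℝ E = d + 1)
    {t : Finset ι} {y : ι → E} {p : E} {s r : ℝ} (hs : 0 < s) (hsr : s ≤ r)
    (hy : ∀ i ∈ t, ‖y i‖ = 1) (hsep : (t : Set ι).Pairwise fun i j ↦ s ≤ dist (y i) (y j))
    (hball : ∀ i ∈ t, y i ∈ closedBall p r) :
    (#t : ℝ) ≤ 9 ^ (d + 1) * (r / s) ^ d := by
  have : FiniteDimensional ℝ E := .of_finrank_pos (by lia)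
  have hr : 0 < r := hs.trans_le hsr
  have hone : 1 ≤ r / s := (one_le_div hs).2 hsr
  let m := ⌊r / s⌋₊ + 1
  have hcopies : ∀ q ∈ t ×ˢ Finset.range m, radialCopy y s q ∈ closedBall p (2 * r) := by
    intro q hq
    obtain ⟨hqt, hqm⟩ := Finset.mem_product.1 hq
    have hk : (q.2 : ℝ) ≤ r / s :=
      (Nat.le_floor_iff (by positivity)).1 (Nat.lt_succ_iff.1 (Finset.mem_range.1 hqm))
    have hks : q.2 * s ≤ r := (le_div_iff₀ hs).1 hk
    have hqr : dist (y q.1) p ≤ r := hball q.1 hqt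
    rw [mem_closedBall]
    linarith [dist_radialCopy_le hs.le (hy q.1 hqt) p]
  have hpack := card_le_of_pairwise_le_dist_of_mem_closedBall (half_pos hs) (by positivity)
    (fun q hq q' hq' ↦ half_le_dist_radialCopy hs.le hy hsep (Finset.mem_product.1 hq).1
      (Finset.mem_product.1 hq').1) hcopies
  have hmul : #t * (r / s) ≤ 9 ^ (d + 1) * (r / s) ^ d * (r / s) :=
    calc
      #t * (r / s) ≤ #t * (m : ℝ) := by
        gcongr
        exact_mod_cast (Nat.lt_floor_add_one (r / s)).le
      _ = #(t ×ˢ Finset.range m) := by simp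
      _ ≤ (1 + 2 * (2 * r) / (s / 2)) ^ (d + 1) := hE ▸ hpack
      _ ≤ (9 * (r / s)) ^ (d + 1) := by
        gcongr
        calc
          1 + 2 * (2 * r) / (s / 2) = 1 + 8 * (r / s) := by ring
          _ ≤ 9 * (r / s) := by linarith
      _ = 9 ^ (d + 1) * (r / s) ^ d * (r / s) := by rw [mul_pow, pow_succ (r / s), mul_assoc]
  exact le_of_mul_le_mul_right hmul (by positivity)

theorem card_filter_dist_le_of_norm_eq_one {d : ℕ} (hE : finrank ℝ E = d + 1)
    {t : Finset ι} {y : ι → E} {p : E} {s r : ℝ} (hs : 0 < s) (hr : 0 < r)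
    (hy : ∀ i ∈ t, ‖y i‖ = 1) (hsep : (t : Set ι).Pairwise fun i j ↦ s ≤ dist (y i) (y j))
    (hp : ∀ i ∈ t, s ≤ dist (y i) p) :
    (#{i ∈ t | dist (y i) p ≤ r} : ℝ) ≤ 9 ^ (d + 1) * (r / s) ^ d := by
  rcases le_or_gt s r with hsr | hrs
  · have hsubset := Finset.filter_subset (fun i ↦ dist (y i) p ≤ r) t
    exact card_le_of_norm_eq_one_of_mem_closedBall hE hs hsr (fun i hi ↦ hy i (hsubset hi))
      (hsep.mono hsubset) fun i hi ↦ (Finset.mem_filter.1 hi).2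
  · have hempty : {i ∈ t | dist (y i) p ≤ r} = ∅ :=
      Finset.filter_eq_empty_iff.2 fun i hi ↦ not_le.2 (hrs.trans_le (hp i hi))
    rw [hempty, Finset.card_empty, Nat.cast_zero]
    positivity

end Packing

section LogarithmicSum

variable {ι : Type*} {t : Finset ι}

theorem factorial_card_le_prod_of_card_filter_le {w : ι → ℝ}
    (hw : ∀ i ∈ t, (#{j ∈ t | w j ≤ w i} : ℝ) ≤ w i) : ((#t)! : ℝ) ≤ ∏ i ∈ t, w i := by
  classical
  induction t using Finset.induction_on_max_value w with
  | empty => simp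
  | insert a t ha hmax ih =>
    have hcard : (#t + 1 : ℝ) ≤ w a := by
      have hall : {j ∈ insert a t | w j ≤ w a} = insert a t :=
        Finset.filter_true_of_mem (by simpa using hmax)
      simpa [hall, ha] using hw a (Finset.mem_insert_self a t)
    have hrest : ((#t)! : ℝ) ≤ ∏ i ∈ t, w i := ih fun i hi ↦ by
      refine le_trans ?_ (hw i (Finset.mem_insert_of_mem hi))
      gcongr
      exact Finset.subset_insert a t
    rw [Finset.card_insert_of_notMem ha, Finset.prod_insert ha, Nat.factorial_succ]
    push_cast
    exact mul_le_mul hcard hrest (by positivity) (le_trans (by positivity) hcard)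

theorem sum_log_div_le_of_card_filter_le {w : ι → ℝ} {M : ℝ} (hM : 0 < M)
    (hw : ∀ i ∈ t, (#{j ∈ t | w j ≤ w i} : ℝ) ≤ w i) :
    ∑ i ∈ t, log (M / w i) ≤ M := by
  have hpos : ∀ i ∈ t, 0 < w i := fun i hi ↦ by
    have hcard : 0 < #{j ∈ t | w j ≤ w i} := Finset.card_pos.2 ⟨i, by simp [hi]⟩
    exact (Nat.cast_pos.2 hcard).trans_le (hw i hi)
  have hprod : 0 < ∏ i ∈ t, w i := Finset.prod_pos hpos
  calc
    ∑ i ∈ t, log (M / w i) = log (M ^ #t / ∏ i ∈ t, w i) := by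
      rw [← log_prod fun i hi ↦ (div_pos hM (hpos i hi)).ne', Finset.prod_div_distrib,
        Finset.prod_const]
    _ ≤ log (M ^ #t / (#t)!) := by
      gcongr
      exact factorial_card_le_prod_of_card_filter_le hw
    _ ≤ log (exp M) := by
      gcongr
      exact pow_div_factorial_le_exp M hM.le _
    _ = M := log_exp M

variable {ρ : ι → ℝ} {A δ : ℝ} {d : ℕ}

theorem mul_sum_log_div_le_of_card_filter_le (hA : 0 < A) (hd : d ≠ 0)
    (hρ : ∀ i ∈ t, 0 < ρ i) (hcount : ∀ i ∈ t, #{j ∈ t | ρ j ≤ ρ i} ≤ A * ρ i ^ d) (hδ : 0 < δ) :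
    d * ∑ i ∈ t, log (δ / ρ i) ≤ A * δ ^ d := by
  have hterm (i : ι) : d * log (δ / ρ i) = log (A * δ ^ d / (A * ρ i ^ d)) := by
    rw [mul_div_mul_left _ _ hA.ne', ← div_pow, log_pow]
  rw [Finset.mul_sum, Finset.sum_congr rfl fun i _ ↦ hterm i]
  refine sum_log_div_le_of_card_filter_le (by positivity)
    fun i hi ↦ le_trans ?_ (hcount i hi)
  have hmono : ∀ j ∈ t, A * ρ j ^ d ≤ A * ρ i ^ d → ρ j ≤ ρ i := fun j _ hj ↦
    le_of_pow_le_pow_left₀ hd (hρ i hi).le (le_of_mul_le_mul_left hj hA)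
  exact_mod_cast Finset.card_le_card (Finset.monotone_filter_right t hmono)

theorem sum_neg_log_le_of_card_filter_le (hA : 0 < A) (hd : d ≠ 0) (hρ : ∀ i ∈ t, 0 < ρ i)
    (hcount : ∀ r, 0 < r → #{i ∈ t | ρ i ≤ r} ≤ A * r ^ d) (hδ : 0 < δ) :
    ∑ i ∈ t with ρ i ≤ δ, -log (ρ i) ≤ A * δ ^ d * (1 + |log δ|) := by
  let u := {i ∈ t | ρ i ≤ δ}
  have hut : u ⊆ t := Finset.filter_subset _ t
  have hcount_u : ∀ i ∈ u, #{j ∈ u | ρ j ≤ ρ i} ≤ A * ρ i ^ d := fun i hi ↦ by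
    refine le_trans ?_ (hcount (ρ i) (hρ i (hut hi)))
    gcongr
  have hnonneg : 0 ≤ ∑ i ∈ u, log (δ / ρ i) := Finset.sum_nonneg fun i hi ↦
    log_nonneg ((one_le_div (hρ i (hut hi))).2 (Finset.mem_filter.1 hi).2)
  have hquot : ∑ i ∈ u, log (δ / ρ i) ≤ A * δ ^ d :=
    calc
      ∑ i ∈ u, log (δ / ρ i) ≤ d * ∑ i ∈ u, log (δ / ρ i) :=
        le_mul_of_one_le_left hnonneg (by exact_mod_cast Nat.one_le_iff_ne_zero.2 hd)
      _ ≤ A * δ ^ d :=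
        mul_sum_log_div_le_of_card_filter_le hA hd (fun i hi ↦ hρ i (hut hi)) hcount_u hδ
  calc
    ∑ i ∈ u, -log (ρ i) = ∑ i ∈ u, log (δ / ρ i) + #u * -log δ := by
      rw [← nsmul_eq_mul, ← Finset.sum_const, ← Finset.sum_add_distrib]
      refine Finset.sum_congr rfl fun i hi ↦ ?_
      rw [log_div hδ.ne' (hρ i (hut hi)).ne']
      ring
    _ ≤ A * δ ^ d + #u * |log δ| := by
      gcongr
      exact neg_le_abs _
    _ ≤ A * δ ^ d + A * δ ^ d * |log δ| := by
      gcongr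
      exact hcount δ hδ
    _ = A * δ ^ d * (1 + |log δ|) := by ring

end LogarithmicSum

theorem separation_counting_general {E ι : Type*} [NormedAddCommGroup E] [NormedSpace ℝ E]
    {d : ℕ} (hd : d ≠ 0) (hE : finrank ℝ E = d + 1) {c n : ℝ} (hc : 0 < c) (hn : 0 < n)
    {t : Finset ι} {y : ι → E} {p : E} (hy : ∀ i ∈ t, ‖y i‖ = 1)
    (hsep : (t : Set ι).Pairwise fun i j ↦ c / n ^ (d⁻¹ : ℝ) ≤ dist (y i) (y j))
    (hp : ∀ i ∈ t, c / n ^ (d⁻¹ : ℝ) ≤ dist (y i) p) :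
    (∀ r, 0 < r → #{i ∈ t | dist (y i) p ≤ r} ≤ 9 ^ (d + 1) / c ^ d * r ^ d * n) ∧
      ∀ δ, 0 < δ → ∑ i ∈ t with dist (y i) p ≤ δ, -log (dist (y i) p) ≤
        9 ^ (d + 1) / c ^ d * n * δ ^ d * (1 + |log δ|) := by
  have hs : 0 < c / n ^ (d⁻¹ : ℝ) := by positivity
  have hcount (r : ℝ) (hr : 0 < r) :
      #{i ∈ t | dist (y i) p ≤ r} ≤ 9 ^ (d + 1) / c ^ d * n * r ^ d :=
    calc
      (#{i ∈ t | dist (y i) p ≤ r} : ℝ) ≤ 9 ^ (d + 1) * (r / (c / n ^ (d⁻¹ : ℝ))) ^ d :=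
        card_filter_dist_le_of_norm_eq_one hE hs hr hy hsep hp
      _ = 9 ^ (d + 1) / c ^ d * n * r ^ d := by
        rw [div_pow, div_pow, rpow_inv_natCast_pow hn.le hd]
        field_simp
  exact ⟨fun r hr ↦ (hcount r hr).trans_eq (mul_right_comm _ _ _), fun δ hδ ↦
    sum_neg_log_le_of_card_filter_le (by positivity) hd (fun i hi ↦ hs.trans_le (hp i hi))
      hcount hδ⟩

/-- For well-separated points on the unit sphere which also stay at distance `> c/√n` from
the north pole `N`: (i) at most `C r² n` points lie within distance `r` of `N`, and
(ii) `∑_{‖yᵢ−N‖ ≤ δ} (−log ‖yᵢ−N‖) ≤ C n δ² (1 + |log δ|)` for `δ ∈ (0, 1/2]`. -/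
theorem separation_counting (c : ℝ) (hc : 0 < c) :
    ∃ C : ℝ, ∀ n : ℕ, 2 ≤ n → ∀ y : Fin n → EuclideanSpace ℝ (Fin 3),
      (∀ i, ‖y i‖ = 1) →
      (∀ i j, i ≠ j → dist (y i) (y j) > c / Real.sqrt n) →
      (∀ i, dist (y i) northPoleUnit > c / Real.sqrt n) →
      (∀ r : ℝ, 0 < r →
        ((Finset.univ.filter fun i => dist (y i) northPoleUnit ≤ r).card : ℝ)
          ≤ C * r^2 * n) ∧
      (∀ δ : ℝ, 0 < δ → δ ≤ 1/2 →
        ∑ i ∈ Finset.univ.filter fun i => dist (y i) northPoleUnit ≤ δ,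
            (-Real.log (dist (y i) northPoleUnit))
          ≤ C * n * δ^2 * (1 + |Real.log δ|)) := by
  refine ⟨9 ^ 3 / c ^ 2, fun n hn y hy hsep hp ↦ ?_⟩
  have hgeneral := separation_counting_general (t := Finset.univ) (d := 2) two_ne_zero (by simp)
    hc (n := n) (by positivity) (fun i _ ↦ hy i)
    (fun i _ j _ hij ↦ by simpa [sqrt_eq_rpow] using (hsep i j hij).le)
    (fun i _ ↦ by simpa [sqrt_eq_rpow] using (hp i).le)
  exact ⟨hgeneral.1, fun δ hδ _ ↦ hgeneral.2 δ hδ⟩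
end
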